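/- (Theorem 2.5) For every η ∈ S_{L,M}, the decomposition linearizes the time evolution of the box-ball system with box capacity L: Λ(c(η)) = c(T_L(η)) and T_1(d(η)) = d(T_L(η)); that is, under one step of T_L the background sequence is shifted one site to the right and the soliton sequence evolves by one step of the box-ball system with box capacity one. -/

import Mathlib

namespace BBS

attribute [local instance] Classical.propDecidable

noncomputable section

/-- Carrier sequence with initial load `m` for box capacity `L`. -/
def carrierM (L m : ℤ) (η : ℕ → ℤ) : ℕ → ℤ
  | 0 => m
  | j + 1 => η j + max 0 (η j + carrierM L m η j - L)

/-- Carrier sequence (initial load `0`). -/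
def carrier (L : ℤ) (η : ℕ → ℤ) : ℕ → ℤ := carrierM L 0 η

/-- Time evolution `T_L`. -/
def evol (L : ℤ) (η : ℕ → ℤ) (j : ℕ) : ℤ := min (L - η j) (carrier L η j)

/-- Time evolution `T_1^m` on binary sequences. -/
def evolOne (m : ℤ) (w : ℕ → ℤ) (j : ℕ) : ℤ := min (1 - w j) (carrierM 1 m w j)

/-- Membership in `S_{L,M}`. -/
def mem_S (L M : ℤ) (η : ℕ → ℤ) : Prop :=
  (∃ N : ℕ, ∀ j, N ≤ j → η j = 0) ∧
  (∀ j, -M ≤ η j ∧ η j ≤ L + M) ∧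
  η 0 ≤ 0 ∧
  (∀ j, max (-η j) (η j - L) ≤ M) ∧
  (∃ j, max (-η j) (η j - L) = M) ∧
  (∀ i : ℕ, ∑ j ∈ Finset.range (i + 2), η j ≤ ∑ j ∈ Finset.range (i + 1), (L - η j))

/-- Auxiliary sequence for the backward carrier. -/
def backAux (L : ℤ) (η : ℕ → ℤ) (x : ℕ) : ℕ → ℤ
  | 0 => 0
  | n + 1 => η (x - n - 1) + max 0 (η (x - n - 1) + backAux L η x n - L)

/-- Backward carrier `ū` computed from the index `x`. -/
def backCarrier (L : ℤ) (η : ℕ → ℤ) (x j : ℕ) : ℤ :=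
  if x ≤ j then 0 else backAux L η x (x - j)

/-- Reverse time evolution `R_L` computed from the index `x`. -/
def revol (L : ℤ) (η : ℕ → ℤ) (x j : ℕ) : ℤ :=
  if j < x then min (L - η j) (backCarrier L η x (j + 1)) else 0

/-- The concatenated word sequence `r_K(η)`. -/
def rSeq (L M : ℕ) (K : Set ℕ) (η : ℕ → ℤ) (n : ℕ) : ℤ :=
  if (n / (L + 2 * M) ∈ K ∧ ((n % (L + 2 * M) : ℕ) : ℤ) < η (n / (L + 2 * M)) + M) ∨
      (n / (L + 2 * M) ∉ K ∧
        (L : ℤ) + 2 * M - (η (n / (L + 2 * M)) + M) ≤ ((n % (L + 2 * M) : ℕ) : ℤ))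
  then 1 else 0

/-- The concatenated word sequence `l_K(η)`. -/
def lSeq (L M : ℕ) (K : Set ℕ) (η : ℕ → ℤ) (n : ℕ) : ℤ :=
  if (n / (L + 2 * M) ∈ K ∧
        (L : ℤ) + 2 * M - (η (n / (L + 2 * M)) + M) ≤ ((n % (L + 2 * M) : ℕ) : ℤ)) ∨
      (n / (L + 2 * M) ∉ K ∧ ((n % (L + 2 * M) : ℕ) : ℤ) < η (n / (L + 2 * M)) + M)
  then 1 else 0

/-- Soliton flag sequence `a(η)`. -/
def flag (L : ℤ) (η : ℕ → ℤ) : ℕ → ℤ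
  | 0 => 0
  | j + 1 =>
    if η j + η (j + 1) < L then 0
    else if η j + η (j + 1) = L then flag L η j else 1

/-- Primed soliton flag sequence `a′(η)` (with the convention `a′_{-1} = 0`). -/
def flag' (L : ℤ) (η : ℕ → ℤ) : ℕ → ℤ
  | 0 => if η 0 + η 1 < L then 0 else if η 0 + η 1 = L then 0 else 1
  | j + 1 =>
    if η (j + 1) + η (j + 2) < L then 0
    else if η (j + 1) + η (j + 2) = L then flag' L η j else 1

/-- `I(η)`: right ends of contiguous 1-segments. -/
def Iset (L : ℤ) (η : ℕ → ℤ) : Set ℕ := {j | flag L η j = 1 ∧ flag L η (j + 1) = 0}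

/-- `I′(η)`: left ends of contiguous right-1-segments. -/
def Iset' (L : ℤ) (η : ℕ → ℤ) : Set ℕ :=
  {j | (∀ k, j = k + 1 → flag' L η k = 0) ∧ flag' L η j = 1}

def marked (L : ℤ) (η : ℕ → ℤ) (j : ℕ) : Prop := j ∈ Iset L η ∨ j + 1 ∈ Iset L η

def marked' (L : ℤ) (η : ℕ → ℤ) (j : ℕ) : Prop :=
  j ∈ Iset' L η ∨ ∃ k, j = k + 1 ∧ k ∈ Iset' L η

/-- Arc-count sequence `b̃(η)`. -/
def btilde (L M : ℕ) (η : ℕ → ℤ) (j : ℕ) : ℤ :=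
  if marked (L : ℤ) η j then 0
  else min (η j + M) ((L : ℤ) + 2 * M - (η (j + 1) + M))

/-- `b̃_{j-1}` with the convention `b̃_{-1} = 0`. -/
def bprev (L M : ℕ) (η : ℕ → ℤ) : ℕ → ℤ
  | 0 => 0
  | j + 1 => btilde L M η j

/-- Primed arc-count sequence `b̃′(η)`. -/
def btilde' (L M : ℕ) (η : ℕ → ℤ) : ℕ → ℤ
  | 0 => if marked' (L : ℤ) η 0 then 0 else η 0 + M
  | j + 1 =>
    if marked' (L : ℤ) η (j + 1) then 0
    else min (η (j + 1) + M) ((L : ℤ) + 2 * M - (η j + M))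

/-- Background sequence `c(η)`: subsequence of `b̃` on unmarked indices, lowered by `M`. -/
def bg (L M : ℕ) (η : ℕ → ℤ) (j : ℕ) : ℤ :=
  btilde L M η (Nat.nth (fun i => ¬ marked (L : ℤ) η i) j) - M

/-- Primed background sequence `c′(η)`. -/
def bg' (L M : ℕ) (η : ℕ → ℤ) (j : ℕ) : ℤ :=
  btilde' L M η (Nat.nth (fun i => ¬ marked' (L : ℤ) η i) j) - M

/-- Length of the word corresponding to box `j` in `d̃(η)`. -/
def wordLen (L M : ℕ) (η : ℕ → ℤ) (j : ℕ) : ℕ :=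
  if j ∈ Iset (L : ℤ) η then L + 2 * M
  else ((L : ℤ) + 2 * M - bprev L M η j - btilde L M η j).toNat

def wordStart (L M : ℕ) (η : ℕ → ℤ) (j : ℕ) : ℕ :=
  ∑ k ∈ Finset.range j, wordLen L M η k

/-- Raised soliton word sequence `d̃(η)`. -/
def dTilde (L M : ℕ) (η : ℕ → ℤ) (n : ℕ) : ℤ :=
  if ∃ j, wordStart L M η j ≤ n ∧ n < wordStart L M η (j + 1) ∧
      ((j ∈ Iset (L : ℤ) η ∧ ((n - wordStart L M η j : ℕ) : ℤ) < η j + M) ∨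
        (j ∉ Iset (L : ℤ) η ∧
          (L : ℤ) + 2 * M - (η j + M) - bprev L M η j ≤ ((n - wordStart L M η j : ℕ) : ℤ)))
  then 1 else 0

/-- Length of the word corresponding to box `j` in `d̃′(η)`. -/
def wordLen' (L M : ℕ) (η : ℕ → ℤ) (j : ℕ) : ℕ :=
  if j ∈ Iset' (L : ℤ) η then L + 2 * M
  else ((L : ℤ) + 2 * M - btilde' L M η j - btilde' L M η (j + 1)).toNat

def wordStart' (L M : ℕ) (η : ℕ → ℤ) (j : ℕ) : ℕ :=
  ∑ k ∈ Finset.range j, wordLen' L M η k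

/-- Primed raised soliton word sequence `d̃′(η)`. -/
def dTilde' (L M : ℕ) (η : ℕ → ℤ) (n : ℕ) : ℤ :=
  if ∃ j, wordStart' L M η j ≤ n ∧ n < wordStart' L M η (j + 1) ∧
      ((j ∈ Iset' (L : ℤ) η ∧
          (L : ℤ) + 2 * M - (η j + M) ≤ ((n - wordStart' L M η j : ℕ) : ℤ)) ∨
        (j ∉ Iset' (L : ℤ) η ∧
          ((n - wordStart' L M η j : ℕ) : ℤ) < η j + M - btilde' L M η j))
  then 1 else 0

/-- The sequence `0^{s 1}1^{t 1}0^{s 2}1^{t 2}⋯0^{s N}1^{t N}0^∞`. -/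
def runSeq (N : ℕ) (s t : ℕ → ℕ) (n : ℕ) : ℤ :=
  if ∃ m, 1 ≤ m ∧ m ≤ N ∧
      (∑ k ∈ Finset.Icc 1 (m - 1), (s k + t k)) + s m ≤ n ∧
      n < ∑ k ∈ Finset.Icc 1 m, (s k + t k)
  then 1 else 0

/-- `w = 0^{s 1}1^{t 1}⋯1^{t N}0^∞` is the (maximal) run decomposition of `w`. -/
def IsRunDecomp (N : ℕ) (s t : ℕ → ℕ) (w : ℕ → ℤ) : Prop :=
  (∀ m, 1 ≤ m → m ≤ N → 1 ≤ t m) ∧ (∀ m, 2 ≤ m → m ≤ N → 1 ≤ s m) ∧ w = runSeq N s t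

def shrinkS (M : ℕ) (s : ℕ → ℕ) (m : ℕ) : ℕ := if m = 1 then s 1 - M else s m - 2 * M

def shrinkT (M : ℕ) (t : ℕ → ℕ) (m : ℕ) : ℕ := t m - 2 * M

/-- `d` is the soliton sequence `d(η)`. -/
def IsSolitonSeq (L M : ℕ) (η : ℕ → ℤ) (d : ℕ → ℤ) : Prop :=
  ∃ N s t, IsRunDecomp N s t (dTilde L M η) ∧ d = runSeq N (shrinkS M s) (shrinkT M t)

/-- `d` is the primed soliton sequence `d′(η)`. -/
def IsSolitonSeq' (L M : ℕ) (η : ℕ → ℤ) (d : ℕ → ℤ) : Prop :=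
  ∃ N s t, IsRunDecomp N s t (dTilde' L M η) ∧ d = runSeq N (shrinkS M s) (shrinkT M t)

/-- Forward shift `Λ`. -/
def lam (c : ℕ → ℤ) : ℕ → ℤ
  | 0 => 0
  | j + 1 => c j

/-- Membership in the background space `S^{(b)}_{L,M}`. -/
def mem_Sb (L M : ℤ) (c : ℕ → ℤ) : Prop := mem_S L M c ∧ ∀ j, c j + c (j + 1) ≤ L

/-- Membership in the soliton space `S^{(f)}_L`: a binary sequence with finitely many
ones all of whose maximal runs of equal letters have length greater than `L`. -/
def mem_Sf (L : ℕ) (w : ℕ → ℤ) : Prop :=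
  (∀ n, w n = 0 ∨ w n = 1) ∧ (∃ N : ℕ, ∀ n, N ≤ n → w n = 0) ∧
  ∀ n m : ℕ, n ≤ m → (∀ j, n ≤ j → j ≤ m → w j = w n) →
    (n = 0 ∨ w (n - 1) ≠ w n) → w (m + 1) ≠ w m → L < m + 1 - n

/-- Stages of the iterative arc-pairing construction: at each stage, connect every pair
`i < j` of yet-unpaired positions with `w i = a`, `w j = b` such that every position
strictly between them is already paired. -/
def arcStage (a b : ℤ) (w : ℕ → ℤ) : ℕ → Set (ℕ × ℕ)
  | 0 => ∅
  | k + 1 => arcStage a b w k ∪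
      {p : ℕ × ℕ | p.1 < p.2 ∧ w p.1 = a ∧ w p.2 = b ∧
        (∀ q ∈ arcStage a b w k, p.1 ≠ q.1 ∧ p.1 ≠ q.2 ∧ p.2 ≠ q.1 ∧ p.2 ≠ q.2) ∧
        (∀ m, p.1 < m → m < p.2 → ∃ q ∈ arcStage a b w k, m = q.1 ∨ m = q.2)}

/-- The arc pairing: `arcPairing 1 0 w` is the 10-arc pairing of `w`, and
`arcPairing 0 1 w` is the 01-arc pairing of `w`. -/
def arcPairing (a b : ℤ) (w : ℕ → ℤ) : Set (ℕ × ℕ) := ⋃ k, arcStage a b w k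

/-- Extension of `η` to integer indices with `η_j = L` for `j < 0`. -/
def etaExt (L : ℕ) (η : ℕ → ℤ) (j : ℤ) : ℤ := if j < 0 then (L : ℤ) else η j.toNat

end

end BBS



namespace BBS

attribute [local instance] Classical.propDecidable

noncomputable section

/-! ### Prefix lists of sequences -/

/-- The list `X` agrees with the sequence `w` from position `k` on. -/
def PF (k : ℕ) (X : List ℤ) (w : ℕ → ℤ) : Prop := ∀ i v, X[i]? = some v → w (k + i) = v

theorem PF_nil (k : ℕ) (w : ℕ → ℤ) : PF k [] w := by
  intro i v h; simp at h

theorem PF_append (k : ℕ) (X Y : List ℤ) (w : ℕ → ℤ) :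
    PF k (X ++ Y) w ↔ PF k X w ∧ PF (k + X.length) Y w := by
  constructor
  · intro h
    refine ⟨fun i v hi => h i v ?_, fun i v hi => ?_⟩
    · have : i < X.length := by
        by_contra hc
        rw [List.getElem?_eq_none (by omega)] at hi
        simp at hi
      rw [List.getElem?_append_left this]; exact hi
    · have := h (X.length + i) v (by
        rw [List.getElem?_append_right (by omega)]; simpa using hi)
      rw [← this]; congr 1; omega
  · rintro ⟨h1, h2⟩ i v hi
    by_cases hc : i < X.length
    · rw [List.getElem?_append_left hc] at hi; exact h1 i v hi
    · rw [List.getElem?_append_right (by omega)] at hi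
      have := h2 _ v hi
      rw [← this]; congr 1; omega

theorem PF_replicate (k n : ℕ) (b : ℤ) (w : ℕ → ℤ) :
    PF k (List.replicate n b) w ↔ ∀ i, i < n → w (k + i) = b := by
  unfold PF
  constructor
  · intro h i hi
    exact h i b (by simp [hi])
  · intro h i v hi
    rw [List.getElem?_replicate] at hi
    split_ifs at hi with hc
    simp at hi
    rw [← hi]; exact h i hc

theorem PF_single (k : ℕ) (b : ℤ) (w : ℕ → ℤ) : PF k [b] w ↔ w k = b := by
  have := PF_replicate k 1 b w
  simp only [List.replicate_one] at this
  rw [this]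
  constructor
  · intro h; exact h 0 (by omega)
  · intro h i hi
    have : i = 0 := by omega
    subst this; exact h

theorem PF_lt {X : List ℤ} {w : ℕ → ℤ} (h : PF 0 X w) {i : ℕ} (hi : i < X.length) :
    X[i]? = some (w i) := by
  have := h i X[i] (by simp [hi])
  rw [zero_add] at this
  rw [this]; simp [hi]

/-- Two prefixes of one sequence are comparable. -/
theorem PF_prefix {X Y : List ℤ} {w : ℕ → ℤ} (hX : PF 0 X w) (hY : PF 0 Y w)
    (hl : X.length ≤ Y.length) : ∃ Z, Y = X ++ Z := by
  refine ⟨Y.drop X.length, ?_⟩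
  apply List.ext_getElem?
  intro i
  by_cases hc : i < X.length
  · rw [List.getElem?_append_left hc, PF_lt hX hc, PF_lt hY (by omega)]
  · rw [List.getElem?_append_right (by omega), List.getElem?_drop]
    congr 1; omega

/-- Sequences with arbitrarily long common prefixes are equal. -/
theorem eq_of_PF {w w' : ℕ → ℤ}
    (h : ∀ n : ℕ, ∃ X : List ℤ, n < X.length ∧ PF 0 X w ∧ PF 0 X w') : w = w' := by
  funext n
  obtain ⟨X, hn, h1, h2⟩ := h n
  have a := PF_lt h1 hn
  have b := PF_lt h2 hn
  rw [a] at b; simpa using b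

/-! ### Integer powers of letters -/

/-- The word `b^n`, for an integer exponent `n`. -/
def rep (b n : ℤ) : List ℤ := List.replicate n.toNat b

theorem rep_zero (b : ℤ) : rep b 0 = [] := by simp [rep]

theorem rep_add (b m n : ℤ) (hm : 0 ≤ m) (hn : 0 ≤ n) : rep b m ++ rep b n = rep b (m + n) := by
  unfold rep
  rw [List.replicate_append_replicate, Int.toNat_add hm hn]

theorem rep_add_assoc (X : List ℤ) (b m n : ℤ) (hm : 0 ≤ m) (hn : 0 ≤ n) :
    X ++ rep b m ++ rep b n = X ++ rep b (m + n) := by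
  rw [List.append_assoc, rep_add b m n hm hn]

theorem rep_length (b n : ℤ) : (rep b n).length = n.toNat := by simp [rep]

/-! ### Run lists -/

/-- The finite word `0^{s 1}1^{t 1}⋯0^{s m}1^{t m}`. -/
def RL (s t : ℕ → ℕ) : ℕ → List ℤ
  | 0 => []
  | m + 1 => RL s t m ++ (List.replicate (s (m + 1)) 0 ++ List.replicate (t (m + 1)) 1)

theorem RL_length (s t : ℕ → ℕ) (m : ℕ) :
    (RL s t m).length = ∑ k ∈ Finset.Icc 1 m, (s k + t k) := by
  induction m with
  | zero => simp [RL]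
  | succ m ih =>
    rw [Finset.sum_Icc_succ_top (by omega), RL, List.length_append, ih]; simp

theorem RL_length_mono (s t : ℕ → ℕ) {m n : ℕ} (h : m ≤ n) :
    (RL s t m).length ≤ (RL s t n).length := by
  rw [RL_length, RL_length]
  exact Finset.sum_le_sum_of_subset (Finset.Icc_subset_Icc_right h)

theorem runSeq_eq_one (N : ℕ) (s t : ℕ → ℕ) (m n : ℕ) (hm : m + 1 ≤ N)
    (h1 : (RL s t m).length + s (m + 1) ≤ n) (h2 : n < (RL s t (m + 1)).length) :
    runSeq N s t n = 1 := by
  unfold runSeq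
  rw [if_pos]
  refine ⟨m + 1, by omega, hm, ?_, ?_⟩
  · rw [← RL_length]; exact h1
  · rw [← RL_length]; exact h2

theorem runSeq_eq_zero (N : ℕ) (s t : ℕ → ℕ) (m n : ℕ)
    (h1 : (RL s t m).length ≤ n) (h2 : n < (RL s t m).length + s (m + 1) ∨ N ≤ m) :
    runSeq N s t n = 0 := by
  unfold runSeq
  rw [if_neg]
  rintro ⟨q, hq1, hqN, ha, hb⟩
  rw [← RL_length] at ha hb
  obtain ⟨p, rfl⟩ : ∃ p, q = p + 1 := ⟨q - 1, by omega⟩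
  simp only [Nat.add_sub_cancel] at ha
  by_cases hpm : p + 1 ≤ m
  · have := RL_length_mono s t hpm
    omega
  · rcases h2 with h2 | h2
    · rcases Nat.lt_or_ge m p with hlt | hge
      · have := RL_length_mono s t (show m + 1 ≤ p by omega)
        have e : (RL s t (m + 1)).length = (RL s t m).length + (s (m + 1) + t (m + 1)) := by
          simp [RL]
        omega
      · have : p = m := by omega
        subst this; omega
    · omega

theorem PF_RL (N : ℕ) (s t : ℕ → ℕ) (m : ℕ) (hm : m ≤ N) : PF 0 (RL s t m) (runSeq N s t) := by
  induction m with
  | zero => exact PF_nil _ _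
  | succ m ih =>
    rw [RL, PF_append, PF_append, PF_replicate, PF_replicate]
    have e : (RL s t (m + 1)).length = (RL s t m).length + (s (m + 1) + t (m + 1)) := by
      simp [RL]
    refine ⟨ih (by omega), ?_, ?_⟩
    · intro i hi
      exact runSeq_eq_zero N s t m _ (by omega) (Or.inl (by omega))
    · intro i hi
      simp only [List.length_replicate]
      exact runSeq_eq_one N s t m _ hm (by omega) (by omega)

theorem PF_RL_zeros (N : ℕ) (s t : ℕ → ℕ) (z : ℕ) :
    PF 0 (RL s t N ++ List.replicate z 0) (runSeq N s t) := by
  rw [PF_append, PF_replicate]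
  refine ⟨PF_RL N s t N le_rfl, fun i _ => ?_⟩
  exact runSeq_eq_zero N s t N _ (by omega) (Or.inr le_rfl)

/-! ### Shrinking runs by a scanning automaton -/

/-- State: current letter, raw length of the current run, shrunk closed runs. -/
def shStep (M : ℕ) (st : ℤ × ℕ × List ℤ) (b : ℤ) : ℤ × ℕ × List ℤ :=
  if b = st.1 then (b, st.2.1 + 1, st.2.2)
  else (b, 1, st.2.2 ++ List.replicate (st.2.1 - 2 * M) st.1)

def sh (M : ℕ) (st : ℤ × ℕ × List ℤ) (X : List ℤ) : ℤ × ℕ × List ℤ := X.foldl (shStep M) st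

def shOut (M : ℕ) (st : ℤ × ℕ × List ℤ) : List ℤ :=
  st.2.2 ++ List.replicate (st.2.1 - 2 * M) st.1

theorem sh_append (M : ℕ) (st) (X Y : List ℤ) : sh M st (X ++ Y) = sh M (sh M st X) Y := by
  simp [sh, List.foldl_append]

theorem sh_same (M : ℕ) (b : ℤ) (c a : ℕ) (O : List ℤ) :
    sh M (b, c, O) (List.replicate a b) = (b, c + a, O) := by
  induction a generalizing c with
  | zero => simp [sh]
  | succ a ih =>
    rw [List.replicate_succ]
    have : sh M (b, c, O) (b :: List.replicate a b) = sh M (b, c + 1, O) (List.replicate a b) := by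
      simp [sh, shStep]
    rw [this, ih]; congr 2; omega

theorem sh_switch (M : ℕ) (b b' : ℤ) (hb : b' ≠ b) (c a : ℕ) (ha : 1 ≤ a) (O : List ℤ) :
    sh M (b, c, O) (List.replicate a b') = (b', a, O ++ List.replicate (c - 2 * M) b) := by
  obtain ⟨a, rfl⟩ : ∃ k, a = k + 1 := ⟨a - 1, by omega⟩
  rw [List.replicate_succ]
  have : sh M (b, c, O) (b' :: List.replicate a b') =
      sh M (b', 1, O ++ List.replicate (c - 2 * M) b) (List.replicate a b') := by
    simp [sh, shStep, hb]
  rw [this, sh_same]; congr 2; omega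

theorem sh_RL (M N : ℕ) (s t : ℕ → ℕ) (ht : ∀ m, 1 ≤ m → m ≤ N → 1 ≤ t m)
    (hs : ∀ m, 2 ≤ m → m ≤ N → 1 ≤ s m) (m : ℕ) (hm : m + 1 ≤ N) :
    ∃ O, sh M (0, M, []) (RL s t (m + 1)) = (1, t (m + 1), O) ∧
      O ++ List.replicate (t (m + 1) - 2 * M) 1 = RL (shrinkS M s) (shrinkT M t) (m + 1) := by
  induction m with
  | zero =>
    refine ⟨List.replicate (s 1 - M) 0, ?_, ?_⟩
    · simp only [RL, List.nil_append, zero_add]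
      rw [sh_append, sh_same, sh_switch M 0 1 (by norm_num) _ _ (ht 1 (by omega) (by omega))]
      simp only [List.nil_append]
      congr 3; omega
    · simp [RL, shrinkS, shrinkT]
  | succ m ih =>
    obtain ⟨O, h1, h2⟩ := ih (by omega)
    rw [RL, sh_append, h1, sh_append,
      sh_switch M 1 0 (by norm_num) _ _ (hs (m + 1 + 1) (by omega) hm),
      sh_switch M 0 1 (by norm_num) _ _ (ht (m + 1 + 1) (by omega) hm)]
    refine ⟨_, rfl, ?_⟩
    rw [h2, RL]
    simp [shrinkS, shrinkT, RL]

theorem shOut_RL (M N : ℕ) (s t : ℕ → ℕ) (ht : ∀ m, 1 ≤ m → m ≤ N → 1 ≤ t m)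
    (hs : ∀ m, 2 ≤ m → m ≤ N → 1 ≤ s m) (z : ℕ) :
    ∃ z', shOut M (sh M (0, M, []) (RL s t N ++ List.replicate z 0)) =
      RL (shrinkS M s) (shrinkT M t) N ++ List.replicate z' 0 := by
  rcases N with _ | m
  · refine ⟨M + z - 2 * M, ?_⟩
    simp only [RL, List.nil_append]
    rw [sh_same]; simp [shOut]
  · obtain ⟨O, h1, h2⟩ := sh_RL M (m + 1) s t ht hs m le_rfl
    rw [sh_append, h1]
    rcases Nat.eq_zero_or_pos z with rfl | hz
    · refine ⟨0, ?_⟩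
      simp [sh, shOut, h2]
    · refine ⟨z - 2 * M, ?_⟩
      rw [sh_switch M 1 0 (by norm_num) _ _ hz, h2]
      simp [shOut]

end

end BBS

namespace BBS

attribute [local instance] Classical.propDecidable

noncomputable section

/-! ### Steps of the path associated with a state -/

/-- The sequence `η_{j-1}` with `η_{-1} = 0`. -/
def pv (η : ℕ → ℤ) : ℕ → ℤ
  | 0 => 0
  | j + 1 => η j

/-- The path increments `η_{j-1} + η_j - L`. -/
def inc (L : ℤ) (η : ℕ → ℤ) (j : ℕ) : ℤ := pv η j + η j - L

/-- The previous flag. -/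
def fp (L : ℤ) (η : ℕ → ℤ) : ℕ → ℤ
  | 0 => 0
  | j + 1 => flag L η j

/-- Whether the previous index belongs to `I`. -/
def Ip (L : ℤ) (η : ℕ → ℤ) : ℕ → Prop
  | 0 => False
  | j + 1 => j ∈ Iset L η

theorem flag_rec (L : ℤ) (η : ℕ → ℤ) (h0 : η 0 < L) (j : ℕ) :
    flag L η j = if inc L η j < 0 then 0 else if inc L η j = 0 then fp L η j else 1 := by
  cases j with
  | zero => simp [flag, inc, pv, h0]
  | succ j =>
    simp only [flag, inc, pv, fp]
    split_ifs <;> first | rfl | omega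

theorem flag_succ (L : ℤ) (η : ℕ → ℤ) (j : ℕ) :
    flag L η (j + 1) =
      if inc L η (j + 1) < 0 then 0 else if inc L η (j + 1) = 0 then flag L η j else 1 := by
  simp only [flag, inc, pv]
  split_ifs <;> first | rfl | omega

theorem flag_zero (L : ℤ) (η : ℕ → ℤ) : flag L η 0 = 0 := rfl

theorem flag_01 (L : ℤ) (η : ℕ → ℤ) (j : ℕ) : flag L η j = 0 ∨ flag L η j = 1 := by
  induction j with
  | zero => left; rfl
  | succ j ih =>
    rw [flag_succ]; split_ifs <;> simp [ih]

theorem mem_I (L : ℤ) (η : ℕ → ℤ) (j : ℕ) :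
    j ∈ Iset L η ↔ flag L η j = 1 ∧ flag L η (j + 1) = 0 := Iff.rfl

theorem I_facts (L : ℤ) (η : ℕ → ℤ) (j : ℕ) (hj : j ∈ Iset L η) :
    0 ≤ inc L η j ∧ inc L η (j + 1) < 0 ∧ j + 1 ∉ Iset L η ∧ ¬ Ip L η j ∧ j ≠ 0 := by
  rw [mem_I] at hj
  obtain ⟨h1, h2⟩ := hj
  have hne : j ≠ 0 := by
    rintro rfl; rw [flag_zero] at h1; omega
  obtain ⟨i, rfl⟩ : ∃ i, j = i + 1 := ⟨j - 1, by omega⟩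
  refine ⟨?_, ?_, ?_, ?_, hne⟩
  · rw [flag_succ] at h1; split_ifs at h1 <;> omega
  · rw [flag_succ] at h2; split_ifs at h2 <;> omega
  · rw [mem_I]; omega
  · simp only [Ip]; rw [mem_I]; omega

/-- The step word `0^{x^- + K [j-1 ∈ I]} 1^{x^+ + K [j ∈ I]}`. -/
def stepW (L K : ℤ) (η : ℕ → ℤ) (j : ℕ) : List ℤ :=
  rep 0 (max 0 (-inc L η j) + if Ip L η j then K else 0) ++
    rep 1 (max 0 (inc L η j) + if j ∈ Iset L η then K else 0)

def WP (L K : ℤ) (η : ℕ → ℤ) : ℕ → List ℤ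
  | 0 => []
  | j + 1 => WP L K η j ++ stepW L K η j

/-- The properties of states which are used. -/
structure Good (L M : ℕ) (η : ℕ → ℤ) : Prop where
  lo : ∀ j, -(M : ℤ) ≤ η j
  hi : ∀ j, η j ≤ L + M
  z : η 0 ≤ 0
  ev : ∃ N : ℕ, ∀ j, N ≤ j → η j = 0

/-- The word of box `j`. -/
def boxW (L M : ℕ) (η : ℕ → ℤ) (j : ℕ) : List ℤ :=
  if j ∈ Iset (L : ℤ) η then rep 1 (η j + M) ++ rep 0 ((L : ℤ) + 2 * M - (η j + M))
  else rep 0 ((L : ℤ) + 2 * M - (η j + M) - bprev L M η j) ++ rep 1 (η j + M - btilde L M η j)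

def BP (L M : ℕ) (η : ℕ → ℤ) : ℕ → List ℤ
  | 0 => []
  | j + 1 => BP L M η j ++ boxW L M η j

theorem btilde_bounds (L M : ℕ) (η : ℕ → ℤ) (h : Good L M η) (j : ℕ) :
    0 ≤ btilde L M η j ∧ btilde L M η j ≤ η j + M ∧
      btilde L M η j ≤ (L : ℤ) + 2 * M - (η (j + 1) + M) := by
  have h1 := h.lo j
  have h2 := h.hi j
  have h3 := h.lo (j + 1)
  have h4 := h.hi (j + 1)
  unfold btilde
  split_ifs <;> omega

theorem bprev_bounds (L M : ℕ) (η : ℕ → ℤ) (h : Good L M η) (j : ℕ) :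
    0 ≤ bprev L M η j ∧ bprev L M η j ≤ (L : ℤ) + 2 * M - (η j + M) := by
  have h3 := h.lo j
  have h4 := h.hi j
  cases j with
  | zero => simp only [bprev]; omega
  | succ j => have := btilde_bounds L M η h j; simp only [bprev]; omega

theorem boxW_length (L M : ℕ) (η : ℕ → ℤ) (h : Good L M η) (j : ℕ) :
    (boxW L M η j).length = wordLen L M η j := by
  have h1 := h.lo j
  have h2 := h.hi j
  have h3 := btilde_bounds L M η h j
  have h4 := bprev_bounds L M η h j
  unfold boxW wordLen
  split_ifs <;> simp only [List.length_append, rep_length] <;> omega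

theorem BP_length (L M : ℕ) (η : ℕ → ℤ) (h : Good L M η) (j : ℕ) :
    (BP L M η j).length = wordStart L M η j := by
  induction j with
  | zero => simp [BP, wordStart]
  | succ j ih =>
    rw [BP, List.length_append, ih, boxW_length L M η h]
    simp [wordStart, Finset.sum_range_succ]

theorem wordStart_mono (L M : ℕ) (η : ℕ → ℤ) {i j : ℕ} (h : i ≤ j) :
    wordStart L M η i ≤ wordStart L M η j := by
  unfold wordStart
  exact Finset.sum_le_sum_of_subset (Finset.range_mono h)

theorem dTilde_val (L M : ℕ) (η : ℕ → ℤ) (j k : ℕ) (hk : k < wordLen L M η j) :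
    dTilde L M η (wordStart L M η j + k) =
      if ((j ∈ Iset (L : ℤ) η ∧ (k : ℤ) < η j + M) ∨
        (j ∉ Iset (L : ℤ) η ∧ (L : ℤ) + 2 * M - (η j + M) - bprev L M η j ≤ (k : ℤ)))
      then 1 else 0 := by
  have hs : wordStart L M η (j + 1) = wordStart L M η j + wordLen L M η j := by
    simp [wordStart, Finset.sum_range_succ]
  unfold dTilde
  congr 1
  apply propext
  constructor
  · rintro ⟨i, h1, h2, h3⟩
    have hij : i = j := by
      rcases lt_trichotomy i j with h | h | h
      · have := wordStart_mono L M η (show i + 1 ≤ j by omega); omega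
      · exact h
      · have := wordStart_mono L M η (show j + 1 ≤ i by omega); omega
    subst hij
    simpa using h3
  · intro h
    refine ⟨j, by omega, by omega, ?_⟩
    simpa using h

theorem PF_BP (L M : ℕ) (η : ℕ → ℤ) (h : Good L M η) (j : ℕ) :
    PF 0 (BP L M η j) (dTilde L M η) := by
  induction j with
  | zero => exact PF_nil _ _
  | succ j ih =>
    rw [BP, PF_append]
    refine ⟨ih, ?_⟩
    have hl := boxW_length L M η h j
    rw [BP_length L M η h, zero_add]
    have h1 := h.lo j
    have h2 := h.hi j
    have h3 := btilde_bounds L M η h j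
    have h4 := bprev_bounds L M η h j
    by_cases hI : j ∈ Iset (L : ℤ) η
    · simp only [boxW, if_pos hI] at hl ⊢
      simp only [List.length_append, rep_length] at hl
      rw [PF_append, rep, rep, PF_replicate, PF_replicate]
      simp only [List.length_replicate]
      refine ⟨fun i hi => ?_, fun i hi => ?_⟩
      · rw [dTilde_val L M η j i (by omega), if_pos (Or.inl ⟨hI, by omega⟩)]
      · rw [add_assoc, dTilde_val L M η j _ (by omega), if_neg]
        rintro (⟨_, h5⟩ | ⟨h5, _⟩)
        · omega
        · exact h5 hI
    · simp only [boxW, if_neg hI] at hl ⊢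
      simp only [List.length_append, rep_length] at hl
      rw [PF_append, rep, rep, PF_replicate, PF_replicate]
      simp only [List.length_replicate]
      refine ⟨fun i hi => ?_, fun i hi => ?_⟩
      · rw [dTilde_val L M η j i (by omega), if_neg]
        rintro (⟨h5, _⟩ | ⟨_, h5⟩)
        · exact hI h5
        · omega
      · rw [add_assoc, dTilde_val L M η j _ (by omega), if_pos (Or.inr ⟨hI, by omega⟩)]

/-- The part of step `j` already contained in the words of the boxes before `j`. -/
def part (L M : ℕ) (η : ℕ → ℤ) (j : ℕ) : List ℤ :=
  if j ∈ Iset (L : ℤ) η then rep 1 (pv η j + M)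
  else if Ip (L : ℤ) η j then rep 0 ((L : ℤ) + 2 * M - (pv η j + M))
  else rep 1 (max 0 (inc L η j))

/-- The ones at the end of the word of a box outside `I`. -/
theorem tail_part (L M : ℕ) (η : ℕ → ℤ) (j : ℕ) (hj : j ∉ Iset (L : ℤ) η) :
    rep 1 (η j + M - btilde L M η j) = part L M η (j + 1) := by
  unfold part btilde marked
  have e : Ip (L : ℤ) η (j + 1) ↔ j ∈ Iset (L : ℤ) η := Iff.rfl
  simp only [e, hj, false_or, if_false]
  by_cases h1 : j + 1 ∈ Iset (L : ℤ) η
  · simp [h1, pv]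
  · simp only [h1, if_false]
    congr 1
    simp only [inc, pv]
    omega

theorem part_box (L M : ℕ) (η : ℕ → ℤ) (h : Good L M η) (i : ℕ) :
    part L M η (i + 1) ++ boxW L M η (i + 1) =
      stepW L ((L : ℤ) + 2 * M) η (i + 1) ++ part L M η (i + 2) := by
  have h1 := h.lo i
  have h2 := h.hi i
  have h3 := h.lo (i + 1)
  have h4 := h.hi (i + 1)
  have e : Ip (L : ℤ) η (i + 1) ↔ i ∈ Iset (L : ℤ) η := Iff.rfl
  have ei : inc L η (i + 1) = η i + η (i + 1) - L := rfl
  by_cases hI : i + 1 ∈ Iset (L : ℤ) η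
  · obtain ⟨f1, f2, f3, f4, -⟩ := I_facts _ _ _ hI
    have e2 : Ip (L : ℤ) η (i + 2) := hI
    have g1 : part L M η (i + 1) = rep 1 (η i + M) := by simp [part, hI, pv]
    have g2 : part L M η (i + 2) = rep 0 ((L : ℤ) + 2 * M - (η (i + 1) + M)) := by
      simp [part, f3, e2, pv]
    rw [g1, g2]
    simp only [boxW, stepW, if_pos hI, if_neg f4]
    rw [← List.append_assoc, rep_add _ _ _ (by omega) (by omega)]
    rw [show max 0 (-inc L η (i + 1)) + 0 = 0 by omega, rep_zero, List.nil_append]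
    congr 2
    omega
  · simp only [boxW, if_neg hI]
    rw [tail_part L M η _ hI, ← List.append_assoc]
    congr 1
    simp only [stepW, if_neg hI, bprev]
    by_cases hi : i ∈ Iset (L : ℤ) η
    · obtain ⟨f1, f2, f3, f4, -⟩ := I_facts _ _ _ hi
      have g1 : part L M η (i + 1) = rep 0 ((L : ℤ) + 2 * M - (η i + M)) := by
        simp [part, hI, e, hi, pv]
      have g2 : btilde L M η i = 0 := by simp [btilde, marked, hi]
      rw [g1, g2, if_pos (e.2 hi), rep_add _ _ _ (by omega) (by omega),
        show max 0 (inc L η (i + 1)) + 0 = 0 by omega, rep_zero, List.append_nil]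
      congr 1
      omega
    · have g1 : part L M η (i + 1) = rep 1 (max 0 (inc L η (i + 1))) := by
        simp [part, hI, e, hi]
      have g2 : btilde L M η i = min (η i + M) ((L : ℤ) + 2 * M - (η (i + 1) + M)) := by
        simp [btilde, marked, hi, hI]
      rw [g1, g2, if_neg (fun hh => hi (e.1 hh))]
      rcases lt_or_ge (inc L η (i + 1)) 0 with hx | hx
      · rw [show max 0 (inc L η (i + 1)) = 0 by omega, show (0 : ℤ) + 0 = 0 by rfl, rep_zero,
          List.nil_append, List.append_nil]
        congr 1
        omega
      · rw [show max 0 (-inc L η (i + 1)) + 0 = 0 by omega, rep_zero, List.nil_append,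
          show (L : ℤ) + 2 * M - (η (i + 1) + M) -
            min (η i + M) ((L : ℤ) + 2 * M - (η (i + 1) + M)) = 0 by omega, rep_zero,
          List.append_nil]
        congr 1
        omega

theorem zero_not_I (L : ℤ) (η : ℕ → ℤ) : 0 ∉ Iset L η := by
  rw [mem_I, flag_zero]; omega

theorem BP_eq (L M : ℕ) (η : ℕ → ℤ) (h : Good L M η) (j : ℕ) :
    BP L M η (j + 1) =
      (rep 0 M ++ WP L ((L : ℤ) + 2 * M) η (j + 1)) ++ part L M η (j + 1) := by
  induction j with
  | zero =>
    simp only [BP, WP, List.nil_append, boxW, if_neg (zero_not_I (L : ℤ) η), stepW]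
    have h0 := h.z
    have ei : inc L η 0 = η 0 - L := by simp [inc, pv]
    rw [tail_part L M η 0 (zero_not_I _ _), if_neg (fun hh => hh : ¬ Ip (L : ℤ) η 0)]
    congr 1
    rw [show max 0 (inc L η 0) + 0 = 0 by omega, rep_zero, List.append_nil,
      rep_add _ _ _ (by omega) (by omega)]
    congr 1
    simp only [bprev]
    omega
  | succ j ih =>
    rw [BP, ih, List.append_assoc, part_box L M η h]
    simp only [WP, List.append_assoc]

theorem PF_WPraised (L M : ℕ) (η : ℕ → ℤ) (h : Good L M η) (j : ℕ) :
    PF 0 (rep 0 M ++ WP L ((L : ℤ) + 2 * M) η (j + 1)) (dTilde L M η) := by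
  have := PF_BP L M η h (j + 1)
  rw [BP_eq L M η h, PF_append] at this
  exact this.1

theorem rep_nat (b : ℤ) (n : ℕ) : rep b n = List.replicate n b := by simp [rep]

theorem sh_rep_same (M : ℕ) (b : ℤ) (c : ℕ) (O : List ℤ) (a : ℤ) :
    sh M (b, c, O) (rep b a) = (b, c + a.toNat, O) := sh_same M b c _ O

theorem sh_rep_switch (M : ℕ) (b b' : ℤ) (hb : b' ≠ b) (c : ℕ) (O : List ℤ) (a : ℤ)
    (ha : 0 < a) :
    sh M (b, c, O) (rep b' a) = (b', a.toNat, O ++ rep b ((c : ℤ) - 2 * M)) := by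
  unfold rep
  rw [sh_switch M b b' hb c _ (by omega)]
  congr 4; omega

theorem sh_WP (L M : ℕ) (hL : 1 ≤ L) (η : ℕ → ℤ) (h : Good L M η) (j : ℕ) :
    ∃ (c : ℕ) (O : List ℤ),
      (fp L η j = 0 ∧ ¬ Ip L η j ∧ sh M (0, 2 * M, []) (WP L ((L : ℤ) + 2 * M) η j) = (0, c, O) ∧
        2 * M ≤ c ∧ WP L L η j = O ++ rep 0 ((c : ℤ) - 2 * M)) ∨
      (fp L η j = 1 ∧ Ip L η j ∧
        sh M (0, 2 * M, []) (WP L ((L : ℤ) + 2 * M) η j) = (1, c, O) ∧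
        2 * M ≤ c ∧ WP L L η j = O ++ rep 1 ((c : ℤ) - 2 * M)) ∨
      (fp L η j = 1 ∧ ¬ Ip L η j ∧
        sh M (0, 2 * M, []) (WP L ((L : ℤ) + 2 * M) η j) = (1, c, O) ∧
        WP L L η j = O ++ rep 1 c) := by
  induction j with
  | zero =>
    refine ⟨2 * M, [], Or.inl ⟨rfl, fun hh => hh, ?_, le_rfl, ?_⟩⟩
    · simp [WP, sh]
    · simp [WP, rep]
  | succ j ih =>
    have h0 : η 0 < L := by have := h.z; omega
    have hf := flag_rec L η h0 j
    have hfp : fp L η (j + 1) = flag L η j := rfl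
    have hIp : Ip L η (j + 1) ↔ j ∈ Iset L η := Iff.rfl
    have hfs := flag_succ L η j
    have hm := mem_I L η j
    rw [hfp, hIp]
    simp only [WP, sh_append, stepW]
    obtain ⟨c, O, ih⟩ := ih
    rcases ih with ⟨i1, i2, i3, i4, i5⟩ | ⟨i1, i2, i3, i4, i5⟩ | ⟨i1, i2, i3, i4⟩
    · rw [i3, i5]
      simp only [if_neg i2]
      rw [i1] at hf
      rcases le_or_gt (inc L η j) 0 with hx | hx
      · have hf0 : flag L η j = 0 := by rw [hf]; split_ifs <;> omega
        have hnI : j ∉ Iset (L : ℤ) η := by rw [hm]; omega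
        simp only [if_neg hnI]
        rw [show max 0 (inc L η j) + 0 = 0 by omega, rep_zero]
        refine ⟨c + (-inc L η j).toNat, O, Or.inl ⟨hf0, hnI, ?_, by omega, ?_⟩⟩
        · rw [sh_rep_same]
          simp only [sh, List.foldl_nil]
          congr 2; omega
        · rw [List.append_nil, rep_add_assoc _ _ _ _ (by omega) (by omega)]
          congr 2; omega
      · have hf0 : flag L η j = 1 := by rw [hf]; split_ifs <;> omega
        rw [show max 0 (-inc L η j) + 0 = 0 by omega, rep_zero]
        simp only [List.nil_append]
        have e0 : ∀ st, sh M st [] = st := fun st => rfl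
        rw [e0]
        by_cases hI : j ∈ Iset (L : ℤ) η
        · simp only [if_pos hI]
          rw [sh_rep_switch M 0 1 (by norm_num) _ _ _ (by omega)]
          refine ⟨_, _, Or.inr (Or.inl ⟨hf0, hI, rfl, by omega, ?_⟩)⟩
          congr 2; omega
        · simp only [if_neg hI]
          rw [sh_rep_switch M 0 1 (by norm_num) _ _ _ (by omega)]
          refine ⟨_, _, Or.inr (Or.inr ⟨hf0, hI, rfl, ?_⟩)⟩
          congr 2; omega
    · rw [i3, i5]
      have hx : inc L η j < 0 ∧ j ∉ Iset (L : ℤ) η := by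
        cases j with
        | zero => exact absurd i2 (fun hh => hh)
        | succ i => have := I_facts L η i i2; exact ⟨this.2.1, this.2.2.1⟩
      have hf0 : flag L η j = 0 := by rw [hf]; simp [hx.1]
      simp only [if_pos i2, if_neg hx.2]
      rw [show max 0 (inc L η j) + 0 = 0 by omega, rep_zero,
        sh_rep_switch M 1 0 (by norm_num) _ _ _ (by omega)]
      refine ⟨_, _, Or.inl ⟨hf0, hx.2, rfl, by omega, ?_⟩⟩
      rw [List.append_nil]
      congr 2; omega
    · rw [i3, i4]
      have hx : 0 ≤ inc L η j ∧ flag L η j = 1 := by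
        cases j with
        | zero => simp [fp] at i1
        | succ i =>
          simp only [Ip, mem_I] at i2
          simp only [fp] at i1 hf
          have := flag_01 L η (i + 1)
          have h2 : flag L η (i + 1) = 1 := by tauto
          refine ⟨?_, h2⟩
          rw [h2] at hf
          split_ifs at hf <;> omega
      simp only [if_neg i2]
      rw [show max 0 (-inc L η j) + 0 = 0 by omega, rep_zero]
      have e0 : ∀ st, sh M st [] = st := fun st => rfl
      rw [e0, sh_rep_same, List.nil_append]
      by_cases hI : j ∈ Iset (L : ℤ) η
      · simp only [if_pos hI]
        refine ⟨_, O, Or.inr (Or.inl ⟨hx.2, hI, rfl, by omega, ?_⟩)⟩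
        rw [rep_add_assoc _ _ _ _ (by omega) (by omega)]
        congr 2; omega
      · simp only [if_neg hI]
        refine ⟨_, O, Or.inr (Or.inr ⟨hx.2, hI, rfl, ?_⟩)⟩
        rw [rep_add_assoc _ _ _ _ (by omega) (by omega)]
        congr 2; omega

end

end BBS

namespace BBS

attribute [local instance] Classical.propDecidable

noncomputable section

theorem WP_prefix (L K : ℤ) (η : ℕ → ℤ) (i k : ℕ) :
    ∃ Z, WP L K η (i + k) = WP L K η i ++ Z := by
  induction k with
  | zero => exact ⟨[], by simp⟩
  | succ k ih =>
    obtain ⟨Z, hZ⟩ := ih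
    refine ⟨Z ++ stepW L K η (i + k), ?_⟩
    rw [← add_assoc, WP, hZ, List.append_assoc]

theorem Good.inc_ev {L M : ℕ} {η : ℕ → ℤ} (h : Good L M η) :
    ∃ N : ℕ, ∀ j, N ≤ j → inc L η j = -L ∧ η j = 0 ∧ pv η j = 0 := by
  obtain ⟨N, hN⟩ := h.ev
  refine ⟨N + 1, fun j hj => ?_⟩
  obtain ⟨i, rfl⟩ : ∃ i, j = i + 1 := ⟨j - 1, by omega⟩
  have h1 := hN i (by omega)
  have h2 := hN (i + 1) (by omega)
  simp [inc, pv, h1, h2]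

theorem WP_length_ge {L M : ℕ} (hL : 1 ≤ L) {η : ℕ → ℤ} (h : Good L M η) (K : ℤ) (hK : 0 ≤ K)
    (n : ℕ) : ∃ j0, ∀ j, j0 ≤ j → n ≤ (WP L K η j).length := by
  obtain ⟨N, hN⟩ := h.inc_ev
  have key : ∀ k, k ≤ (WP L K η (N + k)).length := by
    intro k
    induction k with
    | zero => omega
    | succ k ih =>
      rw [← add_assoc, WP, List.length_append, stepW, List.length_append, rep_length, rep_length]
      have := (hN (N + k) (by omega)).1
      rw [this]
      split_ifs <;> omega
  refine ⟨N + n, fun j hj => ?_⟩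
  have := key (j - N)
  rw [show N + (j - N) = j by omega] at this
  omega

/-- The soliton sequence is the infinite concatenation of the step words. -/
theorem soliton_PF {L M : ℕ} (hL : 1 ≤ L) {η : ℕ → ℤ} (h : Good L M η) {d : ℕ → ℤ}
    (hd : IsSolitonSeq L M η d) (j : ℕ) : PF 0 (WP L L η j) d := by
  obtain ⟨N, s, t, ⟨ht, hs, hw⟩, rfl⟩ := hd
  obtain ⟨N0, hN0⟩ := h.inc_ev
  obtain ⟨j0, hj0⟩ := WP_length_ge hL h ((L : ℤ) + 2 * M) (by omega) (RL s t N).length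
  -- a large index
  obtain ⟨J, hJj, hJ0, hJN⟩ : ∃ J, j ≤ J + 1 ∧ j0 ≤ J + 1 ∧ N0 + 1 ≤ J :=
    ⟨j + j0 + N0 + 1, by omega, by omega, by omega⟩
  have hY := PF_WPraised L M η h J
  have hlen : (RL s t N).length ≤ (rep 0 M ++ WP L ((L : ℤ) + 2 * M) η (J + 1)).length := by
    have := hj0 (J + 1) hJ0
    rw [List.length_append]; omega
  set Y := rep 0 M ++ WP L ((L : ℤ) + 2 * M) η (J + 1) with hYd
  have hR := PF_RL_zeros N s t (Y.length - (RL s t N).length)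
  rw [← hw] at hR
  obtain ⟨Z, hZ⟩ := PF_prefix hR hY (by simp; omega)
  have hZ0 : Z = [] := by
    have := congrArg List.length hZ
    simp only [List.length_append, List.length_replicate] at this
    apply List.eq_nil_of_length_eq_zero
    omega
  rw [hZ0, List.append_nil] at hZ
  obtain ⟨z', hz'⟩ := shOut_RL M N s t ht hs (Y.length - (RL s t N).length)
  rw [← hZ, hYd, sh_append, sh_rep_same] at hz'
  have e : M + (M : ℤ).toNat = 2 * M := by omega
  rw [e] at hz'
  have hfp : fp L η (J + 1) = 0 := by
    have h0 : η 0 < L := by have := h.z; omega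
    show flag L η J = 0
    rw [flag_rec L η h0, (hN0 J (by omega)).1, if_pos (by omega)]
  obtain ⟨c, O, hc⟩ := sh_WP L M hL η h (J + 1)
  have hfin : WP L L η (J + 1) = RL (shrinkS M s) (shrinkT M t) N ++ List.replicate z' 0 := by
    rw [← hz']
    rcases hc with ⟨_, _, c1, c2, c3⟩ | ⟨c1, _⟩ | ⟨c1, _⟩
    · rw [c1, c3]
      simp only [shOut, rep]
      congr 2; omega
    · omega
    · omega
  have hP := PF_RL_zeros N (shrinkS M s) (shrinkT M t) z'
  rw [← hfin] at hP
  obtain ⟨Z, hZ⟩ := WP_prefix L L η j (J + 1 - j)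
  rw [show j + (J + 1 - j) = J + 1 by omega] at hZ
  rw [hZ, PF_append] at hP
  exact hP.1

/-! ### The carrier -/

/-- The excess of the carrier over the previous box. -/
def ex (L : ℤ) (η : ℕ → ℤ) (j : ℕ) : ℤ := carrier L η j - pv η j

/-- Amount by which the running minimum of the path drops at step `j`. -/
def dr (L : ℤ) (η : ℕ → ℤ) (j : ℕ) : ℤ := max 0 (-inc L η j - ex L η j)

theorem ex_zero (L : ℤ) (η : ℕ → ℤ) : ex L η 0 = 0 := by simp [ex, carrier, carrierM, pv]

theorem ex_succ (L : ℤ) (η : ℕ → ℤ) (j : ℕ) :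
    ex L η (j + 1) = max 0 (inc L η j + ex L η j) := by
  simp only [ex, carrier, carrierM, pv, inc]
  rw [add_sub_cancel_left]
  congr 1; ring

theorem ex_nonneg (L : ℤ) (η : ℕ → ℤ) (j : ℕ) : 0 ≤ ex L η j := by
  cases j with
  | zero => rw [ex_zero]
  | succ j => rw [ex_succ]; omega

theorem evol_eq (L : ℤ) (η : ℕ → ℤ) (j : ℕ) : evol L η j = L - η j - dr L η j := by
  simp only [evol, dr, ex, inc]; omega

theorem evol_eq' (L : ℤ) (η : ℕ → ℤ) (j : ℕ) :
    evol L η j = pv η j + ex L η j - ex L η (j + 1) := by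
  rw [evol_eq, ex_succ]; simp only [dr, inc]; omega

theorem evol_zero (L : ℤ) (η : ℕ → ℤ) (h0 : η 0 < L) : evol L η 0 = 0 := by
  simp only [evol, carrier, carrierM]; omega

theorem inc_evol_succ (L : ℤ) (η : ℕ → ℤ) (j : ℕ) :
    inc L (evol L η) (j + 1) = -dr L η (j + 1) - dr L η j - inc L η (j + 1) := by
  simp only [inc, pv, evol_eq]; ring

theorem Good.evol {L M : ℕ} (hL : 1 ≤ L) {η : ℕ → ℤ} (h : Good L M η) :
    Good L M (evol L η) := by
  have h0 : η 0 < L := by have := h.z; omega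
  have hc : ∀ j, -(M : ℤ) ≤ carrier L η j := by
    intro j
    have := ex_nonneg L η j
    unfold ex at this
    cases j with
    | zero => simp only [pv] at this; omega
    | succ j => have h1 := h.lo j; simp only [pv] at this; omega
  refine ⟨fun j => ?_, fun j => ?_, ?_, ?_⟩
  · have := hc j; have := h.hi j; simp only [BBS.evol]; omega
  · have := h.lo j; simp only [BBS.evol]; omega
  · rw [evol_zero L η h0]
  · obtain ⟨N, hN⟩ := h.inc_ev
    have key : ∀ k : ℕ, ex L η (N + k) ≤ max 0 (ex L η N - k) := by
      intro k
      induction k with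
      | zero => simp
      | succ k ih =>
        rw [← add_assoc, ex_succ, (hN (N + k) (by omega)).1]
        push_cast
        omega
    refine ⟨N + (ex L η N).toNat, fun j hj => ?_⟩
    have k1 := key (j - N)
    have k2 := key (j + 1 - N)
    rw [show N + (j - N) = j by omega] at k1
    rw [show N + (j + 1 - N) = j + 1 by omega] at k2
    have k3 := ex_nonneg L η j
    have k4 := ex_nonneg L η (j + 1)
    rw [evol_eq', (hN j (by omega)).2.2]
    omega

/-! ### Capacity one evolution on words -/

def outL (v : ℤ) : List ℤ → List ℤ
  | [] => []
  | a :: l => min (1 - a) v :: outL (a + max 0 (a + v - 1)) l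

def carL (v : ℤ) : List ℤ → ℤ
  | [] => v
  | a :: l => carL (a + max 0 (a + v - 1)) l

theorem outL_append (v : ℤ) (X Y : List ℤ) : outL v (X ++ Y) = outL v X ++ outL (carL v X) Y := by
  induction X generalizing v with
  | nil => simp [outL, carL]
  | cons a l ih => simp [outL, carL, ih]

theorem carL_append (v : ℤ) (X Y : List ℤ) : carL v (X ++ Y) = carL (carL v X) Y := by
  induction X generalizing v with
  | nil => simp [carL]
  | cons a l ih => simp [carL, ih]

theorem outL_spec (d : ℕ → ℤ) (X : List ℤ) (h : PF 0 X d) :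
    PF 0 (outL 0 X) (evolOne 0 d) ∧ (outL 0 X).length = X.length ∧
      carL 0 X = carrierM 1 0 d X.length := by
  induction X using List.reverseRecOn with
  | nil => exact ⟨PF_nil _ _, rfl, rfl⟩
  | append_singleton X a ih =>
    rw [PF_append, PF_single, zero_add] at h
    obtain ⟨h1, h2, h3⟩ := ih h.1
    rw [outL_append, carL_append]
    refine ⟨?_, ?_, ?_⟩
    · rw [PF_append]
      refine ⟨h1, ?_⟩
      rw [h2, zero_add]
      simp only [outL]
      rw [PF_single, evolOne, h.2, h3]
    · simp [outL, h2]
    · simp [carL, carrierM, h.2, h3]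

theorem out_ones (v : ℤ) (hv : 0 ≤ v) (a : ℕ) :
    outL v (List.replicate a 1) = List.replicate a 0 ∧ carL v (List.replicate a 1) = v + a := by
  induction a generalizing v with
  | zero => simp [outL, carL]
  | succ a ih =>
    have := ih (v + 1) (by omega)
    rw [List.replicate_succ, List.replicate_succ, outL, carL,
      show (1 : ℤ) + max 0 (1 + v - 1) = v + 1 by omega, this.1, this.2]
    refine ⟨?_, by push_cast; ring⟩
    congr 1; omega

theorem out_zeros (v : ℕ) (a : ℕ) :
    outL v (List.replicate a 0) = List.replicate (min a v) 1 ++ List.replicate (a - min a v) 0 ∧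
      carL v (List.replicate a 0) = ((v - a : ℕ) : ℤ) := by
  induction a generalizing v with
  | zero => simp [outL, carL]
  | succ a ih =>
    have := ih (v - 1)
    rw [List.replicate_succ, outL, carL,
      show (0 : ℤ) + max 0 (0 + (v : ℤ) - 1) = ((v - 1 : ℕ) : ℤ) by omega, this.1, this.2]
    refine ⟨?_, by congr 1; omega⟩
    rcases Nat.eq_zero_or_pos v with rfl | hv
    · simp [List.replicate_succ]
    · rw [show min (a + 1) v = min a (v - 1) + 1 by omega, List.replicate_succ,
        show a + 1 - (min a (v - 1) + 1) = a - min a (v - 1) by omega]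
      simp only [List.cons_append]
      congr 1; omega

theorem out_rep_one (v a : ℤ) (hv : 0 ≤ v) (ha : 0 ≤ a) :
    outL v (rep 1 a) = rep 0 a ∧ carL v (rep 1 a) = v + a := by
  have := out_ones v hv a.toNat
  refine ⟨this.1, ?_⟩
  rw [rep, this.2]; omega

theorem out_rep_zero (v a : ℤ) (hv : 0 ≤ v) (ha : 0 ≤ a) :
    outL v (rep 0 a) = rep 1 (min a v) ++ rep 0 (a - min a v) ∧
      carL v (rep 0 a) = max 0 (v - a) := by
  have := out_zeros v.toNat a.toNat
  rw [show ((v.toNat : ℕ) : ℤ) = v by omega] at this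
  refine ⟨?_, ?_⟩
  · rw [rep, this.1, rep, rep]
    congr 2 <;> omega
  · rw [rep, this.2]; omega

/-- The output of capacity one evolution on the word of step `j`, without trailing zeros. -/
def stepV (L : ℤ) (η : ℕ → ℤ) (j : ℕ) : List ℤ :=
  rep 0 (max 0 (inc L η j) + if j ∈ Iset L η then L else 0) ++
    rep 1 (min (max 0 (-inc L η j)) (ex L η j) + if Ip L η j then L else 0)

/-- Output for the first steps, without the last trailing zeros. -/
def VP (L : ℤ) (η : ℕ → ℤ) : ℕ → List ℤ
  | 0 => stepV L η 0
  | j + 1 => VP L η j ++ rep 0 (dr L η j) ++ stepV L η (j + 1)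

theorem Ip_facts (L : ℤ) (η : ℕ → ℤ) (j : ℕ) (h : Ip L η j) :
    inc L η j < 0 ∧ j ∉ Iset L η := by
  cases j with
  | zero => exact absurd h (fun hh => hh)
  | succ i => have := I_facts L η i h; exact ⟨this.2.1, this.2.2.1⟩

theorem out_step (L : ℤ) (hL : 0 ≤ L) (η : ℕ → ℤ) (j : ℕ) :
    outL (ex L η j + if Ip L η j then L else 0) (stepW L L η j) =
        stepV L η j ++ rep 0 (dr L η j) ∧
      carL (ex L η j + if Ip L η j then L else 0) (stepW L L η j) =
        ex L η (j + 1) + if j ∈ Iset L η then L else 0 := by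
  have hg := ex_nonneg L η j
  have hs := ex_succ L η j
  rw [hs]
  unfold stepW stepV dr
  rw [outL_append, carL_append]
  by_cases hp : Ip L η j
  · obtain ⟨hx, hI⟩ := Ip_facts L η j hp
    simp only [if_pos hp, if_neg hI]
    rw [show max 0 (inc L η j) + 0 = 0 by omega, rep_zero, rep_zero, List.nil_append]
    obtain ⟨h1, h2⟩ := out_rep_zero (ex L η j + L) (max 0 (-inc L η j) + L) (by omega) (by omega)
    rw [h1, h2]
    simp only [outL, carL, List.append_nil]
    refine ⟨?_, by omega⟩
    congr 2 <;> omega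
  · simp only [if_neg hp]
    by_cases hI : j ∈ Iset L η
    · obtain ⟨hx, -⟩ := I_facts L η j hI
      simp only [if_pos hI]
      rw [show max 0 (-inc L η j) + 0 = 0 by omega, show max 0 (-inc L η j) = 0 by omega,
        show min 0 (ex L η j) + 0 = 0 by omega, show max 0 (-inc L η j - ex L η j) = 0 by omega,
        rep_zero, rep_zero]
      obtain ⟨h1, h2⟩ := out_rep_one (ex L η j + 0) (max 0 (inc L η j) + L) (by omega) (by omega)
      simp only [outL, carL, List.append_nil, List.nil_append]
      rw [h1, h2]
      exact ⟨rfl, by omega⟩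
    · simp only [if_neg hI]
      rcases le_or_gt 0 (inc L η j) with hx | hx
      · rw [show max 0 (-inc L η j) + 0 = 0 by omega, show max 0 (-inc L η j) = 0 by omega,
          show min 0 (ex L η j) + 0 = 0 by omega, show max 0 (-inc L η j - ex L η j) = 0 by omega,
          rep_zero, rep_zero]
        obtain ⟨h1, h2⟩ := out_rep_one (ex L η j + 0) (max 0 (inc L η j) + 0) (by omega) (by omega)
        simp only [outL, carL, List.append_nil, List.nil_append]
        rw [h1, h2]
        exact ⟨rfl, by omega⟩
      · rw [show max 0 (inc L η j) + 0 = 0 by omega, rep_zero, rep_zero, List.nil_append]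
        obtain ⟨h1, h2⟩ := out_rep_zero (ex L η j + 0) (max 0 (-inc L η j) + 0)
          (by omega) (by omega)
        rw [h1, h2]
        simp only [outL, carL, List.append_nil]
        refine ⟨?_, by omega⟩
        congr 2 <;> omega

theorem out_WP (L : ℤ) (hL : 0 ≤ L) (η : ℕ → ℤ) (j : ℕ) :
    outL 0 (WP L L η (j + 1)) = VP L η j ++ rep 0 (dr L η j) ∧
      carL 0 (WP L L η (j + 1)) = ex L η (j + 1) + if j ∈ Iset L η then L else 0 := by
  induction j with
  | zero =>
    have := out_step L hL η 0
    rw [ex_zero, if_neg (fun hh => hh : ¬ Ip L η 0), add_zero] at this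
    simpa only [WP, List.nil_append, VP] using this
  | succ j ih =>
    have := out_step L hL η (j + 1)
    have e : (if Ip L η (j + 1) then L else 0) = if j ∈ Iset L η then L else 0 := rfl
    rw [e, ← ih.2] at this
    rw [WP, outL_append, carL_append, this.1, this.2, ih.1]
    refine ⟨?_, rfl⟩
    rw [VP]
    simp only [List.append_assoc]

end

end BBS

namespace BBS

attribute [local instance] Classical.propDecidable

noncomputable section

/-! ### Joint evolution of the flags -/

theorem flag_inv (L : ℤ) (hL : 1 ≤ L) (η : ℕ → ℤ) (h0 : η 0 ≤ 0) (j : ℕ) :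
    (flag L η j = 1 → 0 < ex L η (j + 1) ∧ flag L (evol L η) j = 0) ∧
      (flag L η j = 0 → 0 < ex L η (j + 1) → flag L (evol L η) j = 1) := by
  induction j with
  | zero =>
    have h1 := ex_succ L η 0
    rw [ex_zero] at h1
    have h2 : inc L η 0 = η 0 - L := by simp [inc, pv]
    refine ⟨fun h => ?_, fun _ h => ?_⟩
    · rw [flag_zero] at h; omega
    · omega
  | succ j ih =>
    have e1 := ex_succ L η j
    have e2 := ex_succ L η (j + 1)
    have e3 := inc_evol_succ L η j
    have e4 : dr L η (j + 1) = max 0 (-inc L η (j + 1) - ex L η (j + 1)) := rfl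
    have e5 : dr L η j = max 0 (-inc L η j - ex L η j) := rfl
    have f1 := flag_succ L η j
    have f2 := flag_succ L (evol L η) j
    have f3 := flag_01 L η j
    rcases lt_trichotomy (inc L η (j + 1)) 0 with hx | hx | hx
    · rw [if_pos hx] at f1
      refine ⟨fun h => by omega, fun _ hg => ?_⟩
      rw [f2, if_neg (by omega), if_neg (by omega)]
    · rw [if_neg (by omega), if_pos hx] at f1
      rw [f1]
      refine ⟨fun h => ?_, fun h hg => ?_⟩
      · have := ih.1 h
        refine ⟨by omega, ?_⟩
        rw [f2, if_neg (by omega), if_pos (by omega)]; exact this.2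
      · have := ih.2 h (by omega)
        rw [f2, if_neg (by omega), if_pos (by omega)]; exact this
    · rw [if_neg (by omega), if_neg (by omega)] at f1
      refine ⟨fun _ => ⟨by omega, ?_⟩, fun h => by omega⟩
      rw [f2, if_pos (by omega)]

/-- Prefixes of the background sequence. -/
def CP (L : ℤ) (η : ℕ → ℤ) : ℕ → List ℤ
  | 0 => []
  | j + 1 => CP L η j ++ if marked L η j then [] else [min (η j) (L - η (j + 1))]

/-- The joint invariant for both sequences. -/
def Inv (L : ℤ) (η : ℕ → ℤ) (j : ℕ) : Prop :=
  (flag L (evol L η) j = 0 ∧ j ∉ Iset L η ∧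
    WP L L (evol L η) (j + 1) = VP L η j ++ rep 0 L ∧
    0 :: CP L η j = CP L (evol L η) j ++ [evol L η j]) ∨
  ((j ∈ Iset L η ∨ j ∈ Iset L (evol L η)) ∧
    WP L L (evol L η) (j + 1) = VP L η j ∧
    0 :: CP L η j = CP L (evol L η) j) ∨
  (flag L (evol L η) j = 1 ∧ j ∉ Iset L (evol L η) ∧
    WP L L (evol L η) (j + 1) ++ rep 1 L = VP L η j ∧
    (0 :: CP L η j) ++ [L - evol L η j] = CP L (evol L η) j)

theorem CP_succ (L : ℤ) (η : ℕ → ℤ) (j : ℕ) :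
    CP L η (j + 1) = CP L η j ++
      if (j ∈ Iset L η ∨ j + 1 ∈ Iset L η) then [] else [min (η j) (L - η (j + 1))] := by
  rw [CP]
  by_cases hm : marked L η j
  · rw [if_pos hm, if_pos (show j ∈ Iset L η ∨ j + 1 ∈ Iset L η from hm)]
  · rw [if_neg hm, if_neg (show ¬ (j ∈ Iset L η ∨ j + 1 ∈ Iset L η) from hm)]

set_option maxHeartbeats 4000000 in
theorem inv_all (L : ℤ) (hL : 1 ≤ L) (η : ℕ → ℤ) (h0 : η 0 ≤ 0) (j : ℕ) : Inv L η j := by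
  induction j with
  | zero =>
    left
    have t0 := evol_zero L η (by omega)
    have i1 : inc L (evol L η) 0 = -L := by simp [inc, pv, t0]
    have i2 : inc L η 0 = η 0 - L := by simp [inc, pv]
    refine ⟨rfl, zero_not_I _ _, ?_, ?_⟩
    · simp only [WP, VP, stepW, stepV, if_neg (zero_not_I L η),
        if_neg (zero_not_I L (evol L η)), if_neg (fun hh => hh : ¬ Ip L η 0),
        if_neg (fun hh => hh : ¬ Ip L (evol L η) 0), i1, ex_zero, i2]
      rw [show max 0 (- -L) + 0 = L by omega, show max 0 (-L) + 0 = 0 by omega,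
        show max 0 (η 0 - L) + 0 = 0 by omega,
        show min (max 0 (-(η 0 - L))) 0 + 0 = 0 by omega]
      simp [rep_zero]
    · simp [CP, t0]
  | succ j ih =>
    have hdg : 0 ≤ dr L η j ∧ (dr L η j = 0 ∨ ex L η (j + 1) = 0) := by
      have e1 := ex_succ L η j
      have e5 : dr L η j = max 0 (-inc L η j - ex L η j) := rfl
      omega
    have e3 := inc_evol_succ L η j
    have e4 : dr L η (j + 1) = max 0 (-inc L η (j + 1) - ex L η (j + 1)) := rfl
    have t1 := evol_eq L η j
    have t2 := evol_eq L η (j + 1)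
    have t3 : inc L η (j + 1) = η j + η (j + 1) - L := rfl
    have t4 : inc L (evol L η) (j + 1) = evol L η j + evol L η (j + 1) - L := rfl
    have gn := ex_nonneg L η (j + 1)
    have wq : WP L L (evol L η) (j + 1 + 1) =
      WP L L (evol L η) (j + 1) ++ stepW L L (evol L η) (j + 1) := rfl
    have wv : VP L η (j + 1) = VP L η j ++ rep 0 (dr L η j) ++ stepV L η (j + 1) := rfl
    have cq := CP_succ L (evol L η) j
    have cv := CP_succ L η j
    simp only [stepW, show Ip L (evol L η) (j + 1) ↔ j ∈ Iset L (evol L η) from Iff.rfl] at wq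
    simp only [stepV, show Ip L η (j + 1) ↔ j ∈ Iset L η from Iff.rfl] at wv
    generalize hQ : WP L L (evol L η) (j + 1) = Q at *
    generalize hQ' : WP L L (evol L η) (j + 1 + 1) = Q' at *
    generalize hC : CP L η j = C at *
    generalize hCT : CP L (evol L η) j = CT at *
    unfold Inv at ih ⊢
    rw [hQ, hC, hCT] at ih
    rw [hQ']
    rcases ih with ⟨s1, s2, s3, s4⟩ | ⟨s1 | s1, s3, s4⟩ | ⟨s1, s2, s3, s4⟩
    · -- the background or ascending phase
      have n1 : j ∉ Iset L (evol L η) := by rw [mem_I]; omega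
      have k : flag L (evol L η) (j + 1) = 0 ∧
          inc L (evol L η) (j + 1) = -(dr L η j + max 0 (inc L η (j + 1))) ∧
          min (max 0 (-inc L η (j + 1))) (ex L η (j + 1)) = 0 ∧
          (inc L η (j + 1) < 0 → ex L η (j + 1) = 0) := by
        have hm : inc L η (j + 1) < 0 → ex L η (j + 1) = 0 := by
          intro hx
          have f1 := flag_succ L η j
          rw [if_pos hx] at f1
          have : flag L η j = 0 := by
            rcases flag_01 L η j with h | h
            · exact h
            · exact absurd ((mem_I L η j).2 ⟨h, f1⟩) s2
          by_contra hc
          have := (flag_inv L hL η h0 j).2 this (by omega)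
          omega
        refine ⟨?_, by omega, by omega, hm⟩
        rw [flag_succ]
        split_ifs <;> omega
      obtain ⟨k1, k2, k3, k4⟩ := k
      have n2 : j + 1 ∉ Iset L (evol L η) := by rw [mem_I]; omega
      rw [k2, if_neg n1, if_neg n2] at wq
      rw [k3, if_neg s2] at wv
      rw [show max 0 (-(dr L η j + max 0 (inc L η (j + 1)))) + 0 = 0 by omega, rep_zero,
        List.append_nil, s3] at wq
      rw [show (0 : ℤ) + 0 = 0 by rfl, rep_zero, List.append_nil] at wv
      rw [if_neg (by tauto), show min (evol L η j) (L - evol L η (j + 1)) = evol L η j by omega,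
        ← s4] at cq
      by_cases hI : j + 1 ∈ Iset L η
      · right; left
        rw [if_pos hI] at wv
        rw [if_pos (Or.inr hI), List.append_nil] at cv
        refine ⟨Or.inl hI, ?_, ?_⟩
        · rw [wq, wv, rep_add_assoc _ _ _ _ (by omega) (by omega),
            rep_add_assoc _ _ _ _ (by omega) (by omega)]
          congr 2; omega
        · rw [cq, cv]
      · left
        rw [if_neg hI] at wv
        rw [if_neg (by tauto)] at cv
        refine ⟨k1, hI, ?_, ?_⟩
        · rw [wq, wv, rep_add_assoc _ _ _ _ (by omega) (by omega),
            rep_add_assoc _ _ _ _ (by omega) (by omega),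
            rep_add_assoc _ _ _ _ (by omega) (by omega)]
          congr 2; omega
        · rw [cq, cv]
          simp only [List.cons_append]
          congr 3
          omega
    · -- just after a peak of the path
      obtain ⟨hx0, hx, n2, -, -⟩ := I_facts L η j s1
      obtain ⟨hg, ha⟩ := (flag_inv L hL η h0 j).1 ((mem_I L η j).1 s1).1
      have n1 : j ∉ Iset L (evol L η) := by rw [mem_I]; omega
      have k1 : flag L (evol L η) (j + 1) = 1 := by
        rw [flag_succ, if_neg (by omega), if_neg (by omega)]
      rw [if_neg n1] at wq
      rw [if_neg n2, if_pos s1, show dr L η j = 0 by omega,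
        show max 0 (inc L η (j + 1)) + 0 = 0 by omega, rep_zero, List.append_nil,
        List.nil_append] at wv
      rw [show max 0 (-inc L (evol L η) (j + 1)) + 0 = 0 by omega, rep_zero, List.nil_append,
        s3] at wq
      rw [if_pos (Or.inl s1), List.append_nil] at cv
      by_cases hI : j + 1 ∈ Iset L (evol L η)
      · right; left
        rw [if_pos hI] at wq
        rw [if_pos (Or.inr hI), List.append_nil] at cq
        refine ⟨Or.inr hI, ?_, ?_⟩
        · rw [wq, wv]
          congr 2; omega
        · rw [cq, cv, s4]
      · right; right
        rw [if_neg hI] at wq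
        rw [if_neg (by tauto), ← s4] at cq
        refine ⟨k1, hI, ?_, ?_⟩
        · rw [wq, wv, rep_add_assoc _ _ _ _ (by omega) (by omega)]
          congr 2; omega
        · rw [cq, cv]
          congr 2; omega
    · -- just after a peak of the evolved path
      obtain ⟨hx0, hx, n2, -, -⟩ := I_facts L (evol L η) j s1
      have a1 := (mem_I L (evol L η) j).1 s1
      have a0 : flag L η j = 0 := by
        rcases flag_01 L η j with h | h
        · exact h
        · have := ((flag_inv L hL η h0 j).1 h).2; omega
      have n1 : j ∉ Iset L η := by rw [mem_I]; omega
      have k4 : inc L η (j + 1) < 0 → ex L η (j + 1) = 0 := by omega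
      rw [if_pos s1, if_neg n2, show max 0 (inc L (evol L η) (j + 1)) + 0 = 0 by omega, rep_zero,
        List.append_nil, s3] at wq
      rw [if_neg n1, show min (max 0 (-inc L η (j + 1))) (ex L η (j + 1)) + 0 = 0 by omega,
        rep_zero, List.append_nil] at wv
      rw [if_pos (Or.inl s1), List.append_nil] at cq
      by_cases hI : j + 1 ∈ Iset L η
      · right; left
        rw [if_pos hI] at wv
        rw [if_pos (Or.inr hI), List.append_nil] at cv
        refine ⟨Or.inl hI, ?_, ?_⟩
        · rw [wq, wv, rep_add_assoc _ _ _ _ (by omega) (by omega)]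
          congr 2; omega
        · rw [cq, cv, s4]
      · left
        rw [if_neg hI] at wv
        rw [if_neg (by tauto)] at cv
        refine ⟨a1.2, hI, ?_, ?_⟩
        · rw [wq, wv, rep_add_assoc _ _ _ _ (by omega) (by omega),
            rep_add_assoc _ _ _ _ (by omega) (by omega)]
          congr 2; omega
        · rw [cq, cv, ← s4]
          simp only [List.cons_append]
          congr 3
          omega
    · -- the descending phase
      have k1 : flag L (evol L η) (j + 1) = 1 := by
        rcases flag_01 L (evol L η) (j + 1) with h | h
        · exact absurd ((mem_I L (evol L η) j).2 ⟨s1, h⟩) s2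
        · exact h
      have a0 : flag L η j = 0 := by
        rcases flag_01 L η j with h | h
        · exact h
        · have := ((flag_inv L hL η h0 j).1 h).2; omega
      have hxT : 0 ≤ inc L (evol L η) (j + 1) := by
        have f2 := flag_succ L (evol L η) j; rw [k1] at f2; split_ifs at f2 <;> omega
      have hx : inc L η (j + 1) ≤ 0 ∧ dr L η j = 0 := by omega
      have b0 : flag L η (j + 1) = 0 := by
        rw [flag_succ]; split_ifs <;> omega
      have n1 : j ∉ Iset L η := by rw [mem_I]; omega
      have n2 : j + 1 ∉ Iset L η := by rw [mem_I]; omega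
      rw [if_neg n1, if_neg n2, hx.2, show max 0 (inc L η (j + 1)) + 0 = 0 by omega, rep_zero,
        List.append_nil, List.nil_append, ← s3] at wv
      rw [if_neg s2, show max 0 (-inc L (evol L η) (j + 1)) + 0 = 0 by omega, rep_zero,
        List.nil_append] at wq
      rw [if_neg (by tauto)] at cv
      have hc : 0 :: CP L η (j + 1) = CT := by
        rw [cv, ← s4]
        simp only [List.cons_append]
        congr 3; omega
      by_cases hI : j + 1 ∈ Iset L (evol L η)
      · right; left
        rw [if_pos hI] at wq
        rw [if_pos (Or.inr hI), List.append_nil] at cq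
        refine ⟨Or.inr hI, ?_, ?_⟩
        · rw [wq, wv, rep_add_assoc _ _ _ _ (by omega) (by omega)]
          congr 2; omega
        · rw [cq, hc]
      · right; right
        rw [if_neg hI] at wq
        rw [if_neg (by tauto)] at cq
        refine ⟨k1, hI, ?_, ?_⟩
        · rw [wq, wv, rep_add_assoc _ _ _ _ (by omega) (by omega),
            rep_add_assoc _ _ _ _ (by omega) (by omega)]
          congr 2; omega
        · rw [cq, hc]
          congr 2; omega

/-! ### The background sequence -/

theorem PF_CP (L M : ℕ) (η : ℕ → ℤ) (j : ℕ) :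
    PF 0 (CP L η j) (bg L M η) ∧
      (CP L η j).length = Nat.count (fun i => ¬ marked (L : ℤ) η i) j := by
  induction j with
  | zero => exact ⟨PF_nil _ _, by simp [CP]⟩
  | succ j ih =>
    rw [CP, Nat.count_succ]
    by_cases hm : marked (L : ℤ) η j
    · simpa [hm] using ih
    · simp only [hm, if_false, not_false_eq_true, if_true]
      refine ⟨?_, by rw [List.length_append, ih.2]; simp⟩
      rw [PF_append]
      refine ⟨ih.1, ?_⟩
      rw [PF_single, zero_add, ih.2, bg,
        Nat.nth_count (p := fun i => ¬ marked (L : ℤ) η i) hm, btilde, if_neg hm]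
      omega

theorem CP_length_ge {L M : ℕ} (hL : 1 ≤ L) {η : ℕ → ℤ} (h : Good L M η) (n : ℕ) :
    ∃ j0, ∀ j, j0 ≤ j → n ≤ (CP L η j).length := by
  obtain ⟨N, hN⟩ := h.inc_ev
  have key : ∀ k, k ≤ (CP L η (N + k)).length := by
    intro k
    induction k with
    | zero => omega
    | succ k ih =>
      have hm : ¬ marked (L : ℤ) η (N + k) := by
        rintro (hh | hh)
        · have := (I_facts _ _ _ hh).1
          rw [(hN (N + k) (by omega)).1] at this; omega
        · have := (I_facts _ _ _ hh).1
          rw [(hN (N + k + 1) (by omega)).1] at this; omega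
      rw [← add_assoc, CP, List.length_append, if_neg hm]
      simp only [List.length_cons, List.length_nil]
      omega
  refine ⟨N + n, fun j hj => ?_⟩
  have := key (j - N)
  rw [show N + (j - N) = j by omega] at this
  omega

theorem PF_lam (X : List ℤ) (c : ℕ → ℤ) (h : PF 0 X c) : PF 0 (0 :: X) (lam c) := by
  intro i v hi
  cases i with
  | zero => simp at hi; simp [lam, hi]
  | succ i =>
    simp at hi
    have := h i v hi
    rw [zero_add] at this
    simpa [lam] using this

theorem Good.of_mem {L M : ℕ} {η : ℕ → ℤ} (h : mem_S L M η) : Good L M η :=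
  ⟨fun j => (h.2.1 j).1, fun j => (h.2.1 j).2, h.2.2.1, h.1⟩

theorem main_bg (L M : ℕ) (hL : 1 ≤ L) (η : ℕ → ℤ) (h : Good L M η) :
    lam (bg L M η) = bg L M (evol L η) := by
  apply eq_of_PF
  intro n
  have hT := h.evol hL
  obtain ⟨j0, hj0⟩ := CP_length_ge hL h (n + 1)
  obtain ⟨j1, hj1⟩ := CP_length_ge hL hT (n + 1)
  have a := PF_lam _ _ (PF_CP L M η (j0 + j1)).1
  have b := (PF_CP L M (evol L η) (j0 + j1)).1
  have la := hj0 (j0 + j1) (by omega)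
  have lb := hj1 (j0 + j1) (by omega)
  rcases inv_all L (by omega) η h.z (j0 + j1) with ⟨-, -, -, s⟩ | ⟨-, -, s⟩ | ⟨-, -, -, s⟩
  · rw [s, PF_append] at a
    exact ⟨_, by omega, a.1, b⟩
  · rw [s] at a
    exact ⟨_, by omega, a, b⟩
  · rw [← s, PF_append] at b
    exact ⟨_, by simp; omega, a, b.1⟩

theorem main_soliton (L M : ℕ) (hL : 1 ≤ L) (η : ℕ → ℤ) (h : Good L M η) (d d' : ℕ → ℤ)
    (hd : IsSolitonSeq L M η d) (hd' : IsSolitonSeq L M (evol L η) d') :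
    evolOne 0 d = d' := by
  apply eq_of_PF
  intro n
  have hT := h.evol hL
  obtain ⟨j, hj⟩ := WP_length_ge hL hT (L : ℤ) (by omega) (n + 1 + L)
  have lb := hj (j + 1) (by omega)
  have b := soliton_PF hL hT hd' (j + 1)
  have a := (outL_spec d _ (soliton_PF hL h hd (j + 1))).1
  rw [(out_WP L (by omega) η j).1, PF_append] at a
  replace a := a.1
  rcases inv_all L (by omega) η h.z j with ⟨-, -, s, -⟩ | ⟨-, s, -⟩ | ⟨-, -, s, -⟩
  · rw [s, PF_append] at b
    rw [s, List.length_append, rep_length] at lb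
    exact ⟨_, by omega, a, b.1⟩
  · rw [← s] at a
    exact ⟨_, by omega, a, b⟩
  · rw [← s, PF_append] at a
    exact ⟨_, by omega, a.1, b⟩

end

end BBS

open BBS

/-- Theorem 2.5: the decomposition linearizes the time evolution:
`Λ(c(η)) = c(T_L(η))` and `T_1(d(η)) = d(T_L(η))`. -/
theorem stmt_13 (L M : ℕ) (hL : 1 ≤ L) (η : ℕ → ℤ) (hη : mem_S L M η) :
    lam (bg L M η) = bg L M (evol L η) ∧
    (∀ d d' : ℕ → ℤ, IsSolitonSeq L M η d → IsSolitonSeq L M (evol L η) d' →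
      evolOne 0 d = d') := by
  exact ⟨main_bg L M hL η (Good.of_mem hη), main_soliton L M hL η (Good.of_mem hη)⟩
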